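/- Let A and B be categories with all pullbacks and F : A ⥤ B a functor. Let gl(F) : (B ↓ F) ⥤ A be the Artin gluing, i.e. the projection of the comma category with objects (a : A, b : B, v : b ⟶ F a) to A; it is a bifibration. Then the following are equivalent: (i) F preserves pullbacks; (ii) gl(F) satisfies the Beck–Chevalley condition. -/

import Mathlib

open CategoryTheory CategoryTheory.Limits

namespace MoensPaper

variable {E : Type*} [Category E] {B : Type*} [Category B]

/-- A morphism `φ` of `E` is (strongly) cocartesian over `p`. -/
def IsCocart (p : E ⥤ B) {x y : E} (φ : x ⟶ y) : Prop :=
  ∀ {z : E} (ψ : x ⟶ z) (v : p.obj y ⟶ p.obj z),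
    p.map ψ = p.map φ ≫ v → ∃! τ : y ⟶ z, p.map τ = v ∧ φ ≫ τ = ψ

/-- A morphism `φ` of `E` is (strongly) cartesian over `p`. -/
def IsCart (p : E ⥤ B) {x y : E} (φ : x ⟶ y) : Prop :=
  ∀ {z : E} (ψ : z ⟶ y) (v : p.obj z ⟶ p.obj x),
    p.map ψ = v ≫ p.map φ → ∃! τ : z ⟶ x, p.map τ = v ∧ τ ≫ φ = ψ

/-- `p` is a cocartesian fibration (Grothendieck opfibration): every morphism of `B`
with domain `p.obj x` admits a cocartesian lift with source `x`. -/
def IsCocartFib (p : E ⥤ B) : Prop :=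
  ∀ (x : E) (b : B) (u : p.obj x ⟶ b),
    ∃ (y : E) (φ : x ⟶ y) (h : p.obj y = b),
      IsCocart p φ ∧ p.map φ = u ≫ eqToHom h.symm

/-- `p` is a cartesian fibration (Grothendieck fibration): every morphism of `B`
with codomain `p.obj y` admits a cartesian lift with target `y`. -/
def IsCartFib (p : E ⥤ B) : Prop :=
  ∀ (y : E) (b : B) (u : b ⟶ p.obj y),
    ∃ (x : E) (φ : x ⟶ y) (h : p.obj x = b),
      IsCart p φ ∧ p.map φ = eqToHom h ≫ u

/-- The Beck–Chevalley condition: for every commutative square in `E` lying over a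
pullback square in `B` whose bottom edge is cocartesian and whose two vertical edges
are cartesian, the top edge is cocartesian. -/
def BCC (p : E ⥤ B) : Prop :=
  ∀ {d' e' d e : E} (f' : d' ⟶ e') (g' : d' ⟶ d) (g : e' ⟶ e) (f : d ⟶ e),
    f' ≫ g = g' ≫ f →
    IsPullback (p.map f') (p.map g') (p.map g) (p.map f) →
    IsCocart p f → IsCart p g → IsCart p g' →
    IsCocart p f'

/-!
In `gl(F)` the cocartesian morphisms are those with invertible domain component, and the cartesian
morphisms are those whose underlying square is a pullback. Take a commutative square in `gl(F)` with
cocartesian bottom edge and cartesian right edge. By pasting, its top edge is cocartesian exactly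
when the square formed by its left edge, composed with the image under `F` of its base square, is a
pullback. If `F` preserves pullbacks and the left edge is cartesian, this holds by pasting again.
Conversely, over the objects `(a, F a, 𝟙)` the left edge is automatically cartesian and contributes
nothing to the composite, so Beck–Chevalley there says that `F` preserves the base pullback.
-/

section Lifts

variable {p : E ⥤ B} {x y z : E} {φ : x ⟶ y}

theorem IsCocart.hom_ext (hφ : IsCocart p φ) {τ τ' : y ⟶ z} (hp : p.map τ = p.map τ')
    (h : φ ≫ τ = φ ≫ τ') : τ = τ' :=
  (hφ (φ ≫ τ') (p.map τ') (p.map_comp _ _)).unique ⟨hp, h⟩ ⟨rfl, rfl⟩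

theorem IsCocart.isIso_of_comp {τ : y ⟶ z} (hφ : IsCocart p φ) (hφτ : IsCocart p (φ ≫ τ))
    [IsIso (p.map τ)] : IsIso τ := by
  obtain ⟨σ, ⟨hσ, hφσ⟩, -⟩ := hφτ φ (inv (p.map τ)) (by simp)
  refine ⟨σ, hφ.hom_ext (by simp [hσ]) ?_, hφτ.hom_ext (by simp [hσ]) ?_⟩
  · rw [← Category.assoc, hφσ, Category.comp_id]
  · rw [← Category.assoc, hφσ, Category.comp_id]

theorem IsCart.hom_ext (hφ : IsCart p φ) {τ τ' : z ⟶ x} (hp : p.map τ = p.map τ')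
    (h : τ ≫ φ = τ' ≫ φ) : τ = τ' :=
  (hφ (τ' ≫ φ) (p.map τ') (p.map_comp _ _)).unique ⟨hp, h⟩ ⟨rfl, rfl⟩

end Lifts

section Comma

variable {C D T : Type*} [Category C] [Category D] [Category T] {L : C ⥤ T} {R : D ⥤ T}
  {x y : Comma L R}

/-- The pushforward of an object of `Comma L R` along a morphism `u` out of its right component:
the target of the chosen cocartesian lift of `u`. -/
abbrev pushforward (x : Comma L R) {d : D} (u : x.right ⟶ d) : Comma L R where
  left := x.left
  right := d
  hom := x.hom ≫ R.map u

/-- The chosen cocartesian lift of `u` at `x`. -/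
abbrev toPushforward (x : Comma L R) {d : D} (u : x.right ⟶ d) : x ⟶ pushforward x u where
  left := 𝟙 x.left
  right := u

/-- The vertical comparison from the pushforward of `x` along `φ.right` to the target of `φ`. -/
abbrev fromPushforward (φ : x ⟶ y) : pushforward x φ.right ⟶ y where
  left := φ.left
  right := 𝟙 y.right

theorem toPushforward_comp_fromPushforward (φ : x ⟶ y) :
    toPushforward x φ.right ≫ fromPushforward φ = φ := by
  ext <;> simp

theorem isCocart_of_isIso_left (φ : x ⟶ y) [IsIso φ.left] : IsCocart (Comma.snd L R) φ := by
  intro z ψ v hv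
  have hψ : ψ.right = φ.right ≫ v := hv
  have w : L.map (inv φ.left ≫ ψ.left) ≫ z.hom = y.hom ≫ R.map v := by
    rw [L.map_comp, Category.assoc, ψ.w, hψ, R.map_comp, ← φ.w_assoc, L.map_inv,
      IsIso.inv_hom_id_assoc]
  refine ⟨⟨inv φ.left ≫ ψ.left, v, w⟩, ⟨rfl, ?_⟩, ?_⟩
  · ext <;> simp [hψ]
  · rintro τ ⟨rfl, rfl⟩
    ext <;> simp

theorem isCocart_toPushforward (x : Comma L R) {d : D} (u : x.right ⟶ d) :
    IsCocart (Comma.snd L R) (toPushforward x u) :=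
  have : IsIso (toPushforward x u).left := inferInstanceAs (IsIso (𝟙 x.left))
  isCocart_of_isIso_left _

theorem isCocartFib_comma_snd (L : C ⥤ T) (R : D ⥤ T) : IsCocartFib (Comma.snd L R) :=
  fun x _ u => ⟨pushforward x u, toPushforward x u, rfl, isCocart_toPushforward x u,
    (Category.comp_id u).symm⟩

theorem isCocart_iff_isIso_left (φ : x ⟶ y) :
    IsCocart (Comma.snd L R) φ ↔ IsIso φ.left := by
  refine ⟨fun hφ => ?_, fun _ => isCocart_of_isIso_left φ⟩
  rw [← toPushforward_comp_fromPushforward φ] at hφ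
  have : IsIso ((Comma.snd L R).map (fromPushforward φ)) := inferInstanceAs (IsIso (𝟙 y.right))
  have : IsIso (fromPushforward φ) := IsCocart.isIso_of_comp (isCocart_toPushforward x φ.right) hφ
  exact inferInstanceAs (IsIso (fromPushforward φ).left)

end Comma

section ArtinGluing

variable {A : Type*} [Category A] {F : A ⥤ B}

/-- The Artin gluing `gl(F)`: the projection of the comma category `B ↓ F` to `A`. -/
abbrev artinGluing (F : A ⥤ B) : Comma (𝟭 B) F ⥤ A := Comma.snd (𝟭 B) F

theorem isCart_of_isPullback {x y : Comma (𝟭 B) F} {φ : x ⟶ y}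
    (h : IsPullback (Z := F.obj y.right) φ.left x.hom y.hom (F.map φ.right)) :
    IsCart (artinGluing F) φ := by
  intro z ψ v hv
  have hψ : ψ.right = v ≫ φ.right := hv
  have w : ψ.left ≫ y.hom = (z.hom ≫ F.map v) ≫ F.map φ.right := by
    simpa [hψ] using ψ.w
  refine ⟨⟨h.lift _ _ w, v, h.lift_snd _ _ w⟩, ⟨rfl, ?_⟩, ?_⟩
  · exact Comma.hom_ext _ _ (h.lift_fst _ _ w) hψ.symm
  · rintro τ ⟨rfl, rfl⟩
    exact Comma.hom_ext _ _
      (h.hom_ext (h.lift_fst _ _ w).symm (τ.w.trans (h.lift_snd _ _ w).symm)) rfl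

theorem IsCart.isPullback {x y : Comma (𝟭 B) F} {φ : x ⟶ y} (hφ : IsCart (artinGluing F) φ) :
    IsPullback (Z := F.obj y.right) φ.left x.hom y.hom (F.map φ.right) := by
  have exists_lift (s : PullbackCone (Z := F.obj y.right) y.hom (F.map φ.right)) :
      ∃ l : s.pt ⟶ x.left, l ≫ φ.left = s.fst ∧ l ≫ x.hom = s.snd := by
    let ψ : (⟨s.pt, x.right, s.snd⟩ : Comma (𝟭 B) F) ⟶ y := ⟨s.fst, φ.right, s.condition⟩
    obtain ⟨τ, ⟨hτ, hτφ⟩, -⟩ := hφ ψ (𝟙 x.right) (Category.id_comp _).symm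
    refine ⟨τ.left, congrArg CommaMorphism.left hτφ, τ.w.trans ?_⟩
    rw [show τ.right = 𝟙 x.right from hτ, F.map_id]
    exact Category.comp_id _
  have lift_unique {W : B} {l m : W ⟶ x.left} (hleft : l ≫ φ.left = m ≫ φ.left)
      (hhom : l ≫ x.hom = m ≫ x.hom) : l = m := by
    let z : Comma (𝟭 B) F := ⟨W, x.right, m ≫ x.hom⟩
    let l' : z ⟶ x := { left := l, right := 𝟙 x.right, w := by simpa [z] using hhom }
    let m' : z ⟶ x := { left := m, right := 𝟙 x.right }
    exact congrArg CommaMorphism.left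
      (hφ.hom_ext (τ := l') (τ' := m') rfl (Comma.hom_ext _ _ hleft rfl))
  choose lift lift_left lift_hom using exists_lift
  exact ⟨⟨φ.w⟩, ⟨PullbackCone.IsLimit.mk _ lift lift_left lift_hom fun s m hleft hhom =>
    lift_unique (hleft.trans (lift_left s).symm) (hhom.trans (lift_hom s).symm)⟩⟩

/-- The object `(a, F a, 𝟙)` of `(B ↓ F)`, terminal in the fibre of the gluing over `a`, as a
functor of `a`. -/
abbrev unitSection (F : A ⥤ B) : A ⥤ Comma (𝟭 B) F where
  obj a := ⟨F.obj a, a, 𝟙 (F.obj a)⟩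
  map u := { left := F.map u, right := u }

theorem isCart_unitSection_map (F : A ⥤ B) {a a' : A} (u : a ⟶ a') :
    IsCart (artinGluing F) ((unitSection F).map u) :=
  isCart_of_isPullback (IsPullback.of_id_snd (f := F.map u))

theorem isCartFib_artinGluing [HasPullbacks B] (F : A ⥤ B) : IsCartFib (artinGluing F) := by
  intro y a u
  let x : Comma (𝟭 B) F := ⟨pullback (Z := F.obj y.right) y.hom (F.map u), a, pullback.snd _ _⟩
  let φ : x ⟶ y := ⟨pullback.fst _ _, u, pullback.condition⟩
  exact ⟨x, φ, rfl, isCart_of_isPullback (IsPullback.of_hasPullback _ _),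
    (Category.id_comp u).symm⟩

theorem isCocart_top_iff_isPullback {d' e' d e : Comma (𝟭 B) F} {f' : d' ⟶ e'} {g' : d' ⟶ d}
    {g : e' ⟶ e} {f : d ⟶ e} (sq : f' ≫ g = g' ≫ f) (hf : IsCocart (artinGluing F) f)
    (hg : IsCart (artinGluing F) g) :
    IsCocart (artinGluing F) f' ↔
      IsPullback (Z := F.obj e.right) g'.left (d'.hom ≫ F.map f'.right) (d.hom ≫ F.map f.right)
        (F.map g.right) := by
  rw [isCocart_iff_isIso_left] at hf ⊢
  have sq_left : g'.left ≫ f.left = f'.left ≫ g.left := (congrArg CommaMorphism.left sq).symm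
  rw [← f'.w, ← f.w]
  refine Iff.trans ?_ (IsPullback.paste_vert_iff hg.isPullback sq_left).symm
  exact ⟨fun _ => .of_vert_isIso ⟨sq_left⟩, fun h => h.isIso_snd_of_isIso⟩

theorem bcc_artinGluing_of_map_isPullback
    (hF : ∀ {P X Y Z : A} (fst : P ⟶ X) (snd : P ⟶ Y) (f : X ⟶ Z) (g : Y ⟶ Z),
      IsPullback fst snd f g → IsPullback (F.map fst) (F.map snd) (F.map f) (F.map g)) :
    BCC (artinGluing F) := by
  intro d' e' d e f' g' g f sq hbase hf hg hg'
  rw [isCocart_top_iff_isPullback sq hf hg]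
  exact hg'.isPullback.paste_vert (hF _ _ _ _ hbase).flip

theorem BCC.map_isPullback (hbcc : BCC (artinGluing F)) (hcart : IsCartFib (artinGluing F))
    {P X Y Z : A} {fst : P ⟶ X} {snd : P ⟶ Y} {f : X ⟶ Z} {g : Y ⟶ Z}
    (h : IsPullback fst snd f g) :
    IsPullback (F.map fst) (F.map snd) (F.map f) (F.map g) := by
  let gLift := toPushforward ((unitSection F).obj Y) g
  have hgLift : IsCocart (artinGluing F) gLift := isCocart_toPushforward _ _
  obtain ⟨e', fLift, rfl, hfLift, fLift_right⟩ := hcart (pushforward ((unitSection F).obj Y) g) X f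
  obtain rfl : fLift.right = f := fLift_right.trans (Category.id_comp f)
  obtain ⟨top, ⟨rfl, sq⟩, -⟩ := hfLift ((unitSection F).map snd ≫ gLift) fst h.w.symm
  have htop : IsCocart (artinGluing F) top :=
    hbcc _ _ _ _ sq h hgLift hfLift (isCart_unitSection_map F snd)
  simpa [gLift] using ((isCocart_top_iff_isPullback sq hgLift hfLift).1 htop).flip

end ArtinGluing

theorem stmt_10_general {A : Type*} [Category A] {B : Type*} [Category B]
    [HasPullbacks B] (F : A ⥤ B) :
    (IsCartFib (Comma.snd (𝟭 B) F) ∧ IsCocartFib (Comma.snd (𝟭 B) F)) ∧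
    ((∀ {P X Y Z : A} (fst : P ⟶ X) (snd : P ⟶ Y) (f : X ⟶ Z) (g : Y ⟶ Z),
        IsPullback fst snd f g →
        IsPullback (F.map fst) (F.map snd) (F.map f) (F.map g)) ↔
      BCC (Comma.snd (𝟭 B) F)) :=
  ⟨⟨isCartFib_artinGluing F, isCocartFib_comma_snd (𝟭 B) F⟩,
    fun hF => bcc_artinGluing_of_map_isPullback hF,
    fun hbcc _ _ _ _ _ _ _ _ h => hbcc.map_isPullback (isCartFib_artinGluing F) h⟩

/-- For categories `A`, `B` with pullbacks and `F : A ⥤ B`, the Artin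
gluing `gl(F) : (B ↓ F) ⥤ A` is a bifibration, and `F` preserves pullbacks iff
`gl(F)` satisfies the Beck–Chevalley condition. -/
theorem stmt_10 {A : Type*} [Category A] {B : Type*} [Category B]
    [HasPullbacks A] [HasPullbacks B] (F : A ⥤ B) :
    (IsCartFib (Comma.snd (𝟭 B) F) ∧ IsCocartFib (Comma.snd (𝟭 B) F)) ∧
    ((∀ {P X Y Z : A} (fst : P ⟶ X) (snd : P ⟶ Y) (f : X ⟶ Z) (g : Y ⟶ Z),
        IsPullback fst snd f g →
        IsPullback (F.map fst) (F.map snd) (F.map f) (F.map g)) ↔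
      BCC (Comma.snd (𝟭 B) F)) :=
  stmt_10_general F

end MoensPaper
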